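/- Fix 1 < γ < 2, σ > 0. There is a constant C > 0 such that for every compactly supported smooth function u on the conical domain Ω = {x ∈ ℝ³ : x1²+x2² ≤ tan²φ0 · x3², |x| ≥ 1, x3 > 0} (with 0 < φ0 < π/2), the weighted interpolation inequality holds: ‖ r^{(2γ+2σ−1)/4} ∇u ‖_{L⁴(Ω)} ≤ C ‖ r^{(2γ−1)/2} ∇²u ‖_{L²(Ω)}^{1/2} · ‖ r^{σ} u ‖_{L^∞(Ω)}^{1/2}, where r = |x|. -/

import Mathlib

/-!
Let `S` be closed with `S + t e ⊆ S` for all `t ≥ 0`. If `F ≥ 0` is compactly supported, then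
`∫_S F (x + t e) ≤ ∫_S F`, hence `∫_S ∂ₑF ≤ 0`: an integration by parts whose boundary term has a
favourable sign, whatever the regularity of the boundary. On the cone, `r` is comparable to the
linear function `ℓ x = x₃`, so powers of `ℓ` may serve as weights; normalise `e` by `ℓ e = 1` and
put `κ = 2γ - 1 > 1`, `v = ∂ₑu`, `M = ‖ℓ ^ σ u‖_∞`.

* `F = ℓ ^ (κ - 1) v²` yields Hardy's inequality `∫ ℓ ^ (κ - 2) v² ≤ (2 / (κ - 1))² ∫ ℓ ^ κ (∂ₑv)²`.
* `F = ℓ ^ (κ + 2σ) u v³ + M ℓ ^ (κ + σ) |v|³`, where the second term only serves to make `F`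
  nonnegative, yields `∫ ℓ ^ (κ + 2σ) v⁴ ≲ M² ∫ (ℓ ^ (κ - 2) v² + ℓ ^ κ (∂ₑv)²)`, and the first
  term on the right is controlled by Hardy's inequality.

The cone recedes in enough directions `e` to form a basis, so these `v` control the whole gradient.
-/

open MeasureTheory

/-- The radius r(x) = √(x₁² + x₂² + x₃²). -/
noncomputable def rr (x : Fin 3 → ℝ) : ℝ :=
  Real.sqrt (x 0 ^ 2 + x 1 ^ 2 + x 2 ^ 2)

/-- The conical domain Ω = {x : x₁²+x₂² ≤ tan²φ₀·x₃², |x| ≥ 1, x₃ > 0}. -/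
def cone (φ0 : ℝ) : Set (Fin 3 → ℝ) :=
  {x | x 0 ^ 2 + x 1 ^ 2 ≤ Real.tan φ0 ^ 2 * x 2 ^ 2 ∧ 1 ≤ rr x ∧ 0 < x 2}

open Filter Set Topology
open scoped ENNReal

/-- A direction in which `S` recedes: `S` contains the ray through `e` issued from any of its
points. For a closed convex set these are the elements of the recession cone. -/
def IsRecessionDirection {E : Type*} [AddCommGroup E] [Module ℝ E] (S : Set E) (e : E) : Prop :=
  ∀ ⦃x⦄, x ∈ S → ∀ ⦃t : ℝ⦄, 0 ≤ t → x + t • e ∈ S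

section CompactSupportOn

variable {E F : Type*} [NormedAddCommGroup E] [NormedAddCommGroup F] {S K : Set E} {f : E → F}

lemma exists_norm_le_of_continuousOn_of_eq_zero (hS : IsClosed S) (hK : IsCompact K)
    (hf : ContinuousOn f S) (hf0 : ∀ x ∈ S \ K, f x = 0) : ∃ B, ∀ x ∈ S, ‖f x‖ ≤ B := by
  obtain ⟨B, hB⟩ :=
    (hK.inter_left hS).exists_bound_of_continuousOn (hf.mono inter_subset_left)
  refine ⟨max B 0, fun x hx => ?_⟩
  by_cases hxK : x ∈ K
  · exact (hB x ⟨hx, hxK⟩).trans (le_max_left _ _)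
  · simp [hf0 x ⟨hx, hxK⟩]

variable [MeasurableSpace E] [BorelSpace E] {μ : Measure E} [IsFiniteMeasureOnCompacts μ]

lemma integrableOn_of_continuousOn_of_eq_zero (hS : IsClosed S) (hK : IsCompact K)
    (hf : ContinuousOn f S) (hf0 : ∀ x ∈ S \ K, f x = 0) : IntegrableOn f S μ := by
  refine IntegrableOn.of_forall_sdiff_eq_zero
    ((hf.mono inter_subset_left).integrableOn_compact (hK.inter_left hS)) hS.measurableSet ?_
  exact fun x hx => hf0 x ⟨hx.1, fun hxK => hx.2 ⟨hx.1, hxK⟩⟩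

lemma memLp_top_of_continuousOn_of_eq_zero (hS : IsClosed S) (hK : IsCompact K)
    (hf : ContinuousOn f S) (hf0 : ∀ x ∈ S \ K, f x = 0) : MemLp f ⊤ (μ.restrict S) := by
  obtain ⟨B, hB⟩ := exists_norm_le_of_continuousOn_of_eq_zero hS hK hf hf0
  exact memLp_top_of_bound
    (integrableOn_of_continuousOn_of_eq_zero hS hK hf hf0).aestronglyMeasurable B
    (ae_restrict_of_forall_mem hS.measurableSet hB)

end CompactSupportOn

/-! ### Integration by parts along a recession direction -/

section Translation

variable {E : Type*} [NormedAddCommGroup E] [MeasurableSpace E] [BorelSpace E]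
  {μ : Measure E} [μ.IsAddRightInvariant] {S : Set E} {v : E} {F : E → ℝ}

lemma integrableOn_comp_add_right (hSv : ∀ x ∈ S, x + v ∈ S) (hF : IntegrableOn F S μ) :
    IntegrableOn (fun x => F (x + v)) S μ :=
  (((measurePreserving_add_right μ v).integrableOn_comp_preimage
    (measurableEmbedding_addRight v)).2 hF).mono_set hSv

lemma setIntegral_comp_add_right_le (hSv : ∀ x ∈ S, x + v ∈ S) (hF : IntegrableOn F S μ)
    (hF0 : 0 ≤ᵐ[μ.restrict S] F) : ∫ x in S, F (x + v) ∂μ ≤ ∫ x in S, F x ∂μ := by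
  have hmp := measurePreserving_add_right μ v
  have hemb := measurableEmbedding_addRight v
  rw [← hmp.setIntegral_preimage_emb hemb F S]
  exact setIntegral_mono_set ((hmp.integrableOn_comp_preimage hemb).2 hF)
    ((hmp.restrict_preimage_emb hemb S).quasiMeasurePreserving.ae hF0)
    (Eventually.of_forall hSv)

end Translation

/-- `F` has at every point of `S` the derivative `D` in the direction `e`, and both `F` and `D` are
continuous on `S`: the regularity along a single direction that the one-dimensional arguments
need. The line derivative is two-sided, so it involves values of `F` off `S`. -/
structure HasContLineDerivOn {E : Type*} [NormedAddCommGroup E] [NormedSpace ℝ E]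
    (F D : E → ℝ) (S : Set E) (e : E) : Prop where
  continuousOn : ContinuousOn F S
  continuousOn_deriv : ContinuousOn D S
  hasLineDerivAt : ∀ x ∈ S, HasLineDerivAt ℝ F (D x) x e

section LineDerivative

variable {E : Type*} [NormedAddCommGroup E] [NormedSpace ℝ E] {S K : Set E} {e : E}
  {F G D D' : E → ℝ}

namespace HasContLineDerivOn

lemma add (hF : HasContLineDerivOn F D S e) (hG : HasContLineDerivOn G D' S e) :
    HasContLineDerivOn (fun x => F x + G x) (fun x => D x + D' x) S e where
  continuousOn := hF.continuousOn.add hG.continuousOn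
  continuousOn_deriv := hF.continuousOn_deriv.add hG.continuousOn_deriv
  hasLineDerivAt x hx :=
    HasDerivAt.fun_add (hF.hasLineDerivAt x hx) (hG.hasLineDerivAt x hx)

lemma mul (hF : HasContLineDerivOn F D S e) (hG : HasContLineDerivOn G D' S e) :
    HasContLineDerivOn (fun x => F x * G x) (fun x => D x * G x + F x * D' x) S e where
  continuousOn := hF.continuousOn.mul hG.continuousOn
  continuousOn_deriv := (hF.continuousOn_deriv.mul hG.continuousOn).add
    (hF.continuousOn.mul hG.continuousOn_deriv)
  hasLineDerivAt x hx := by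
    have h := HasDerivAt.fun_mul (hF.hasLineDerivAt x hx) (hG.hasLineDerivAt x hx)
    simp only [zero_smul, add_zero] at h
    exact h

lemma const_mul (c : ℝ) (hF : HasContLineDerivOn F D S e) :
    HasContLineDerivOn (fun x => c * F x) (fun x => c * D x) S e where
  continuousOn := continuousOn_const.mul hF.continuousOn
  continuousOn_deriv := continuousOn_const.mul hF.continuousOn_deriv
  hasLineDerivAt x hx := HasDerivAt.const_mul c (hF.hasLineDerivAt x hx)

lemma comp {φ φ' : ℝ → ℝ} (hF : HasContLineDerivOn F D S e)
    (hφ : ∀ x ∈ S, HasDerivAt φ (φ' (F x)) (F x))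
    (hφ' : ContinuousOn (fun x => φ' (F x)) S) :
    HasContLineDerivOn (fun x => φ (F x)) (fun x => φ' (F x) * D x) S e where
  continuousOn x hx := (hφ x hx).continuousAt.comp_continuousWithinAt (hF.continuousOn x hx)
  continuousOn_deriv := hφ'.mul hF.continuousOn_deriv
  hasLineDerivAt x hx :=
    HasDerivAt.comp_of_eq (0 : ℝ) (hφ x hx) (hF.hasLineDerivAt x hx) (by simp)

lemma pow (n : ℕ) (hF : HasContLineDerivOn F D S e) :
    HasContLineDerivOn (fun x => F x ^ n) (fun x => n * F x ^ (n - 1) * D x) S e :=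
  hF.comp (φ := fun y => y ^ n) (φ' := fun y => n * y ^ (n - 1))
    (fun x _ => hasDerivAt_pow n (F x)) (continuousOn_const.mul (hF.continuousOn.pow _))

lemma rpow_const (p : ℝ) (hF : HasContLineDerivOn F D S e) (hpos : ∀ x ∈ S, 0 < F x) :
    HasContLineDerivOn (fun x => F x ^ p) (fun x => p * F x ^ (p - 1) * D x) S e :=
  hF.comp (φ := fun y => y ^ p) (φ' := fun y => p * y ^ (p - 1))
    (fun x hx => Real.hasDerivAt_rpow_const (Or.inl (hpos x hx).ne'))
    (continuousOn_const.mul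
      (hF.continuousOn.rpow_const fun x hx => Or.inl (hpos x hx).ne'))

lemma abs_pow_three (hF : HasContLineDerivOn F D S e) :
    HasContLineDerivOn (fun x => |F x| ^ 3) (fun x => 3 * |F x| * F x * D x) S e := by
  refine hF.comp (φ := fun y => |y| ^ 3) (φ' := fun y => 3 * |y| * y) (fun x _ => ?_)
    ((continuousOn_const.mul hF.continuousOn.abs).mul hF.continuousOn)
  have h := hasDerivAt_abs_rpow (F x) (p := 3) (by norm_num)
  norm_num at h
  exact_mod_cast h

end HasContLineDerivOn

lemma hasContLineDerivOn_continuousLinearMap (ℓ : E →L[ℝ] ℝ) :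
    HasContLineDerivOn ℓ (fun _ => ℓ e) S e where
  continuousOn := ℓ.continuous.continuousOn
  continuousOn_deriv := continuousOn_const
  hasLineDerivAt _ _ := ℓ.hasFDerivAt.hasLineDerivAt e

lemma hasDerivAt_add_smul_of_hasLineDerivAt {x : E} {F' t : ℝ}
    (h : HasLineDerivAt ℝ F F' (x + t • e) e) : HasDerivAt (fun s : ℝ => F (x + s • e)) F' t := by
  have h0 : HasDerivAt (fun s : ℝ => F (x + t • e + s • e)) F' (t - t) := by
    rw [sub_self]; exact h
  simpa [add_assoc, ← add_smul] using h0.comp_sub_const t t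

lemma IsRecessionDirection.norm_sub_le (he : IsRecessionDirection S e)
    (hF : HasContLineDerivOn F D S e) {B : ℝ} (hB : ∀ x ∈ S, ‖D x‖ ≤ B)
    {x : E} (hx : x ∈ S) {t : ℝ} (ht : 0 ≤ t) : ‖F (x + t • e) - F x‖ ≤ B * t := by
  simpa using norm_image_sub_le_of_norm_deriv_le_segment'
    (fun s hs => (hasDerivAt_add_smul_of_hasLineDerivAt
      (hF.hasLineDerivAt _ (he hx hs.1))).hasDerivWithinAt)
    (fun s hs => hB _ (he hx hs.1)) t ⟨ht, le_rfl⟩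

lemma IsRecessionDirection.lineDeriv_eq_zero (he : IsRecessionDirection S e) (hK : IsClosed K)
    (hF : HasContLineDerivOn F D S e) (hF0 : ∀ x ∈ S \ K, F x = 0) : ∀ x ∈ S \ K, D x = 0 := by
  intro x hx
  refine tendsto_nhds_unique_of_eventuallyEq
    (hF.hasLineDerivAt x hx.1).tendsto_slope_zero_right tendsto_const_nhds ?_
  have hray : Tendsto (fun t : ℝ => x + t • e) (𝓝[>] 0) (𝓝 x) :=
    tendsto_nhdsWithin_of_tendsto_nhds (Continuous.tendsto' (by fun_prop) _ _ (by simp))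
  filter_upwards [self_mem_nhdsWithin, hray (hK.isOpen_compl.mem_nhds hx.2)] with t ht htK
  simp [hF0 x hx, hF0 _ ⟨he hx.1 (le_of_lt ht), htK⟩]

variable [MeasurableSpace E] [BorelSpace E] {μ : Measure E} [IsFiniteMeasureOnCompacts μ]
  [μ.IsAddRightInvariant]

lemma IsRecessionDirection.tendsto_setIntegral_slope (he : IsRecessionDirection S e)
    (hS : IsClosed S) (hK : IsCompact K) (hF : HasContLineDerivOn F D S e)
    (hF0 : ∀ x ∈ S \ K, F x = 0) :
    Tendsto (fun t : ℝ => ∫ x in S, t⁻¹ • (F (x + t • e) - F x) ∂μ) (𝓝[>] 0)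
      (𝓝 (∫ x in S, D x ∂μ)) := by
  obtain ⟨B, hB⟩ := exists_norm_le_of_continuousOn_of_eq_zero hS hK hF.continuousOn_deriv
      (he.lineDeriv_eq_zero hK.isClosed hF hF0)
  have hFint : IntegrableOn F S μ :=
    integrableOn_of_continuousOn_of_eq_zero hS hK hF.continuousOn hF0
  let K' : Set E := (fun p : E × ℝ => p.1 - p.2 • e) '' (K ×ˢ Icc 0 1)
  have hK' : IsCompact K' := (hK.prod isCompact_Icc).image (by fun_prop)
  have hmem : ∀ {x : E} {t : ℝ}, t ∈ Icc (0 : ℝ) 1 → x + t • e ∈ K → x ∈ K' :=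
    fun {x t} ht hx => ⟨(x + t • e, t), ⟨hx, ht⟩, by simp⟩
  refine tendsto_integral_filter_of_dominated_convergence (K'.indicator fun _ => B) ?_ ?_
    ((integrable_indicator_iff hK'.measurableSet).2
      (integrableOn_const hK'.measure_lt_top.ne)).integrableOn
    (ae_restrict_of_forall_mem hS.measurableSet fun x hx =>
      (hF.hasLineDerivAt x hx).tendsto_slope_zero_right)
  · filter_upwards [self_mem_nhdsWithin] with t ht
    exact (((integrableOn_comp_add_right (fun x hx => he hx (le_of_lt ht)) hFint).sub hFint).smul
      t⁻¹).aestronglyMeasurable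
  · filter_upwards [Ioc_mem_nhdsGT one_pos] with t ht
    refine ae_restrict_of_forall_mem hS.measurableSet fun x hx => ?_
    by_cases hxK' : x ∈ K'
    · rw [indicator_of_mem hxK', norm_smul, norm_inv, Real.norm_of_nonneg ht.1.le,
        inv_mul_le_iff₀ ht.1, mul_comm]
      exact he.norm_sub_le hF hB hx ht.1.le
    · have hx0 : x ∉ K := fun h => hxK' (hmem (t := 0) (by simp) (by simpa using h))
      have hxt : x + t • e ∉ K := fun h => hxK' (hmem (Ioc_subset_Icc_self ht) h)
      simp [hxK', hF0 _ ⟨hx, hx0⟩, hF0 _ ⟨he hx ht.1.le, hxt⟩]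

theorem IsRecessionDirection.setIntegral_lineDeriv_nonpos (he : IsRecessionDirection S e)
    (hS : IsClosed S) (hK : IsCompact K) (hF : HasContLineDerivOn F D S e)
    (hF0 : ∀ x ∈ S \ K, F x = 0) (hFnonneg : 0 ≤ᵐ[μ.restrict S] F) :
    ∫ x in S, D x ∂μ ≤ 0 := by
  have hFint : IntegrableOn F S μ :=
    integrableOn_of_continuousOn_of_eq_zero hS hK hF.continuousOn hF0
  refine le_of_tendsto (he.tendsto_setIntegral_slope hS hK hF hF0) ?_
  filter_upwards [self_mem_nhdsWithin] with t (ht : 0 < t)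
  have hSt : ∀ x ∈ S, x + t • e ∈ S := fun x hx => he hx ht.le
  rw [integral_smul, integral_sub (integrableOn_comp_add_right hSt hFint) hFint]
  exact mul_nonpos_of_nonneg_of_nonpos (inv_nonneg.2 ht.le)
    (sub_nonpos.2 (setIntegral_comp_add_right_le hSt hFint hFnonneg))

lemma IsRecessionDirection.mul_setIntegral_le_mul_setIntegral (he : IsRecessionDirection S e)
    (hS : IsClosed S) (hK : IsCompact K) (hF : HasContLineDerivOn F D S e)
    (hF0 : ∀ x ∈ S \ K, F x = 0) (hFnonneg : 0 ≤ᵐ[μ.restrict S] F)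
    {f g : E → ℝ} (hf : IntegrableOn f S μ) (hg : IntegrableOn g S μ) {a b : ℝ}
    (hfg : ∀ᵐ x ∂μ.restrict S, a * f x - b * g x ≤ D x) :
    a * ∫ x in S, f x ∂μ ≤ b * ∫ x in S, g x ∂μ := by
  have hDint : IntegrableOn D S μ :=
    integrableOn_of_continuousOn_of_eq_zero hS hK hF.continuousOn_deriv
      (he.lineDeriv_eq_zero hK.isClosed hF hF0)
  have hle := integral_mono_ae ((hf.const_mul a).sub (hg.const_mul b)) hDint hfg
  rw [integral_sub' (hf.const_mul a) (hg.const_mul b), integral_const_mul,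
    integral_const_mul] at hle
  linarith [he.setIntegral_lineDeriv_nonpos hS hK hF hF0 hFnonneg]

end LineDerivative

lemma ae_norm_le_toReal_eLpNorm_top {α F : Type*} [MeasurableSpace α] [NormedAddCommGroup F]
    {μ : Measure α} {f : α → F} (hf : MemLp f ⊤ μ) :
    ∀ᵐ x ∂μ, ‖f x‖ ≤ (eLpNorm f ⊤ μ).toReal := by
  filter_upwards [ae_le_eLpNormEssSup (f := f) (μ := μ)] with x hx
  rw [← toReal_enorm]
  exact ENNReal.toReal_mono hf.eLpNorm_ne_top hx

lemma eLpNorm_natCast_pow_eq_ofReal_integral {α : Type*} [MeasurableSpace α] {μ : Measure α}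
    {f : α → ℝ} {n : ℕ} (hn : n ≠ 0) (hn' : Even n) (hf : Integrable (fun x => f x ^ n) μ) :
    eLpNorm f n μ ^ n = ENNReal.ofReal (∫ x, f x ^ n ∂μ) := by
  have h := eLpNorm_nnreal_pow_eq_lintegral (f := f) (μ := μ) (p := n) (by exact_mod_cast hn)
  simp only [NNReal.coe_natCast, ENNReal.rpow_natCast, ENNReal.coe_natCast] at h
  rw [h, ofReal_integral_eq_lintegral_ofReal hf (ae_of_all _ fun x => hn'.pow_nonneg _)]
  refine lintegral_congr fun x => ?_
  rw [Real.enorm_eq_ofReal_abs, ← ENNReal.ofReal_pow (abs_nonneg _), hn'.pow_abs]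

lemma le_ofReal_rpow_mul_of_pow_four_le {a b c : ℝ≥0∞} {C : ℝ} (hC : 0 ≤ C)
    (h : a ^ 4 ≤ ENNReal.ofReal C * b ^ 2 * c ^ 2) :
    a ≤ ENNReal.ofReal (C ^ (1 / 4 : ℝ)) * b ^ (1 / 2 : ℝ) * c ^ (1 / 2 : ℝ) := by
  have hhalf (t : ℝ≥0∞) : (t ^ (1 / 2 : ℝ)) ^ 4 = t ^ 2 := by
    rw [← ENNReal.rpow_mul_natCast, ← ENNReal.rpow_natCast]; norm_num
  have hquarter : (C ^ (1 / 4 : ℝ)) ^ 4 = C := by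
    rw [← Real.rpow_mul_natCast hC]; norm_num
  refine (ENNReal.pow_le_pow_left_iff four_ne_zero).1 (h.trans_eq ?_)
  rw [mul_pow, mul_pow, hhalf, hhalf, ← ENNReal.ofReal_pow (by positivity), hquarter]

/-! ### Hardy and interpolation inequalities along a recession direction -/

section Weights

variable {E : Type*} [NormedAddCommGroup E] [NormedSpace ℝ E] {S K : Set E} {ℓ : E →L[ℝ] ℝ}
  {f : E → ℝ}

lemma continuousOn_rpow_const_mul (p : ℝ) (hℓ : ∀ x ∈ S, 0 < ℓ x)
    (hf : ContinuousOn f S) : ContinuousOn (fun x => ℓ x ^ p * f x) S :=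
  (ℓ.continuous.continuousOn.rpow_const fun x hx => Or.inl (hℓ x hx).ne').mul hf

variable [MeasurableSpace E] [BorelSpace E] {μ : Measure E} [IsFiniteMeasureOnCompacts μ]

lemma integrableOn_rpow_const_mul_pow (p : ℝ) {n : ℕ} (hn : n ≠ 0) (hS : IsClosed S)
    (hK : IsCompact K) (hℓ : ∀ x ∈ S, 0 < ℓ x) (hf : ContinuousOn f S)
    (hf0 : ∀ x ∈ S \ K, f x = 0) : IntegrableOn (fun x => ℓ x ^ p * f x ^ n) S μ :=
  integrableOn_of_continuousOn_of_eq_zero hS hK (continuousOn_rpow_const_mul p hℓ (hf.pow n))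
    fun x hx => by simp [hf0 x hx, hn]

lemma eLpNorm_rpow_div_mul_pow {n : ℕ} (p : ℝ) (hn : n ≠ 0) (hn' : Even n) (hS : IsClosed S)
    (hK : IsCompact K) (hℓ : ∀ x ∈ S, 0 < ℓ x) (hf : ContinuousOn f S)
    (hf0 : ∀ x ∈ S \ K, f x = 0) :
    eLpNorm (fun x => ℓ x ^ (p / n) * f x) n (μ.restrict S) ^ n =
      ENNReal.ofReal (∫ x in S, ℓ x ^ p * f x ^ n ∂μ) := by
  have hcongr : EqOn (fun x => (ℓ x ^ (p / n) * f x) ^ n) (fun x => ℓ x ^ p * f x ^ n) S := by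
    intro x hx
    beta_reduce
    rw [mul_pow, ← Real.rpow_mul_natCast (hℓ x hx).le, div_mul_cancel₀ _ (by exact_mod_cast hn)]
  rw [eLpNorm_natCast_pow_eq_ofReal_integral hn hn',
    setIntegral_congr_fun hS.measurableSet hcongr]
  exact (integrableOn_congr_fun hcongr hS.measurableSet).2
    (integrableOn_rpow_const_mul_pow p hn hS hK hℓ hf hf0)

end Weights

lemma half_sq_sub_le_sq_add_mul {M a b s w v δ y : ℝ} (hw : |w| ≤ M) (hs : |s| ≤ 1) :
    y ^ 2 / 2 - M ^ 2 * ((|a| + |b|) ^ 2 * v ^ 2 + 36 * δ ^ 2) ≤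
      y ^ 2 + y * (a * w * v + 3 * w * δ + b * M * |v| + 3 * M * s * δ) := by
  have hM : 0 ≤ M := (abs_nonneg w).trans hw
  set z := a * w * v + 3 * w * δ + b * M * |v| + 3 * M * s * δ
  have hz : |z| ≤ M * ((|a| + |b|) * |v| + 6 * |δ|) := calc
    |z| ≤ |a * w * v| + |3 * w * δ| + |b * M * (|v|)| + |3 * M * s * δ| :=
      (abs_add_le _ _).trans (by gcongr; exact abs_add_three _ _ _)
    _ = |a| * |w| * |v| + 3 * |w| * |δ| + |b| * M * |v| + 3 * M * |s| * |δ| := by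
      simp [abs_mul, abs_of_nonneg hM]
    _ ≤ |a| * M * |v| + 3 * M * |δ| + |b| * M * |v| + 3 * M * 1 * |δ| := by gcongr
    _ = _ := by ring
  have hz2 : z ^ 2 ≤ M ^ 2 * (2 * ((|a| + |b|) ^ 2 * v ^ 2 + 36 * δ ^ 2)) := calc
    z ^ 2 = |z| ^ 2 := (sq_abs z).symm
    _ ≤ (M * ((|a| + |b|) * |v| + 6 * |δ|)) ^ 2 := by gcongr
    _ = M ^ 2 * ((|a| + |b|) * |v| + 6 * |δ|) ^ 2 := mul_pow _ _ _
    _ ≤ M ^ 2 * (2 * (((|a| + |b|) * |v|) ^ 2 + (6 * |δ|) ^ 2)) := by gcongr; exact add_sq_le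
    _ = _ := by rw [mul_pow, mul_pow, sq_abs v, sq_abs δ]; norm_num
  linarith [sq_nonneg (y + z)]

lemma rpow_mul_mul_cube_add_nonneg {κ σ M l u v : ℝ} (hl : 0 < l) (hM : |l ^ σ * u| ≤ M) :
    0 ≤ l ^ (κ + 2 * σ) * (u * v ^ 3) + M * (l ^ (κ + σ) * |v| ^ 3) := by
  have hpow : l ^ (κ + 2 * σ) = l ^ (κ + σ) * l ^ σ := by rw [← Real.rpow_add hl]; ring_nf
  have hcube : |l ^ σ * u * v ^ 3| ≤ M * |v| ^ 3 := by
    rw [abs_mul, abs_pow]; gcongr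
  have h := mul_nonneg (Real.rpow_nonneg hl.le (κ + σ))
    (neg_le_iff_add_nonneg.1 (neg_le_of_abs_le hcube))
  rw [hpow]
  linarith

/-- The right-hand side is the derivative, in a direction where `l' = 1`, `u' = v` and `v' = d`, of
the quantity of `rpow_mul_mul_cube_add_nonneg`. -/
lemma rpow_mul_half_pow_four_sub_le {κ σ M l u v d : ℝ} (hl : 0 < l) (hM : |l ^ σ * u| ≤ M) :
    1 / 2 * (l ^ (κ + 2 * σ) * v ^ 4) - M ^ 2 *
        ((|κ + 2 * σ| + |κ + σ|) ^ 2 * (l ^ (κ - 2) * v ^ 2) + 36 * (l ^ κ * d ^ 2)) ≤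
      (κ + 2 * σ) * l ^ (κ + 2 * σ - 1) * (u * v ^ 3) +
        l ^ (κ + 2 * σ) * (v * v ^ 3 + u * (3 * v ^ 2 * d)) +
        M * ((κ + σ) * l ^ (κ + σ - 1) * |v| ^ 3 + l ^ (κ + σ) * (3 * |v| * v * d)) := by
  obtain ⟨s, hs, hsv⟩ : ∃ s : ℝ, |s| ≤ 1 ∧ |v| = s * v :=
    ⟨SignType.sign v, by rcases lt_trichotomy v 0 with h | rfl | h <;> simp [*],
      (sign_mul_self v).symm⟩
  have hsq : |v| ^ 2 = v ^ 2 := sq_abs v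
  have hP := Real.rpow_pos_of_pos hl (κ - 2)
  have hsplit (k : ℕ) (m : ℕ) (p : ℝ) (hp : p = κ - 2 + m * σ + k) :
      l ^ p = l ^ (κ - 2) * (l ^ σ) ^ m * l ^ k := by
    rw [hp, Real.rpow_add_natCast hl.ne', Real.rpow_add hl, mul_comm (m : ℝ),
      Real.rpow_mul_natCast hl.le]
  rw [hsplit 2 2 (κ + 2 * σ) (by push_cast; ring), hsplit 1 2 (κ + 2 * σ - 1) (by push_cast; ring),
    hsplit 2 1 (κ + σ) (by push_cast; ring), hsplit 1 1 (κ + σ - 1) (by push_cast; ring),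
    hsplit 2 0 κ (by push_cast; ring)]
  have h := mul_le_mul_of_nonneg_left (half_sq_sub_le_sq_add_mul (a := κ + 2 * σ) (b := κ + σ)
    (v := v) (δ := l * d) (y := l * l ^ σ * v ^ 2) hM hs) hP.le
  have h1 : v ^ 2 * |v| = |v| ^ 3 := by rw [← hsq]; ring
  have h2 : v ^ 2 * s = |v| * v := by rw [hsv]; ring
  refine (le_of_eq ?_).trans (h.trans (le_of_eq ?_))
  · ring
  · linear_combination (l ^ (κ - 2) * l ^ σ * l * (κ + σ) * M) * h1 +
      (3 * l ^ (κ - 2) * l ^ σ * l ^ 2 * d * M) * h2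

section AlongDirection

variable {E : Type*} [NormedAddCommGroup E] [NormedSpace ℝ E] [MeasurableSpace E] [BorelSpace E]
  {μ : Measure E} [IsFiniteMeasureOnCompacts μ] [μ.IsAddRightInvariant] {S K : Set E} {e : E}
  {ℓ : E →L[ℝ] ℝ} {u v d : E → ℝ} {κ σ M : ℝ}

theorem IsRecessionDirection.setIntegral_hardy_le (he : IsRecessionDirection S e)
    (hS : IsClosed S) (hK : IsCompact K) (hℓe : ℓ e = 1) (hℓ : ∀ x ∈ S, 0 < ℓ x) (hκ : 1 < κ)
    (hv : HasContLineDerivOn v d S e) (hv0 : ∀ x ∈ S \ K, v x = 0) :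
    ∫ x in S, ℓ x ^ (κ - 2) * v x ^ 2 ∂μ ≤ (2 / (κ - 1)) ^ 2 * ∫ x in S, ℓ x ^ κ * d x ^ 2 ∂μ := by
  have hd0 := he.lineDeriv_eq_zero hK.isClosed hv hv0
  have hκ' : 0 < κ - 1 := sub_pos.2 hκ
  have hF := ((hasContLineDerivOn_continuousLinearMap ℓ).rpow_const (κ - 1) hℓ).mul (hv.pow 2)
  have key : (κ - 1) / 2 * ∫ x in S, ℓ x ^ (κ - 2) * v x ^ 2 ∂μ ≤
      2 / (κ - 1) * ∫ x in S, ℓ x ^ κ * d x ^ 2 ∂μ := by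
    refine he.mul_setIntegral_le_mul_setIntegral hS hK hF (fun x hx => by simp [hv0 x hx])
      (ae_restrict_of_forall_mem hS.measurableSet fun x hx =>
        mul_nonneg (Real.rpow_nonneg (hℓ x hx).le _) (sq_nonneg _))
      (integrableOn_rpow_const_mul_pow _ two_ne_zero hS hK hℓ hv.continuousOn hv0)
      (integrableOn_rpow_const_mul_pow _ two_ne_zero hS hK hℓ hv.continuousOn_deriv hd0)
      (ae_restrict_of_forall_mem hS.measurableSet fun x hx => ?_)
    have hP := Real.rpow_pos_of_pos (hℓ x hx) (κ - 2)
    have h1 : ℓ x ^ (κ - 1) = ℓ x ^ (κ - 2) * ℓ x := by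
      rw [← Real.rpow_add_one (hℓ x hx).ne']; ring_nf
    have h2 : ℓ x ^ κ = ℓ x ^ (κ - 2) * ℓ x ^ 2 := by
      rw [← Real.rpow_add_natCast (hℓ x hx).ne']; simp
    rw [← sub_nonneg, hℓe, h1, h2, show κ - 1 - 1 = κ - 2 by ring]
    generalize ℓ x ^ (κ - 2) = P at hP ⊢
    have hsq : 0 ≤ P / (2 * (κ - 1)) * ((κ - 1) * v x + 2 * (ℓ x * d x)) ^ 2 := by positivity
    convert hsq using 1
    push_cast
    field_simp
    ring
  calc ∫ x in S, ℓ x ^ (κ - 2) * v x ^ 2 ∂μ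
      = 2 / (κ - 1) * ((κ - 1) / 2 * ∫ x in S, ℓ x ^ (κ - 2) * v x ^ 2 ∂μ) := by field_simp
    _ ≤ 2 / (κ - 1) * (2 / (κ - 1) * ∫ x in S, ℓ x ^ κ * d x ^ 2 ∂μ) := by gcongr
    _ = _ := by ring

lemma IsRecessionDirection.half_mul_setIntegral_rpow_mul_pow_four_le
    (he : IsRecessionDirection S e) (hS : IsClosed S) (hK : IsCompact K) (hℓe : ℓ e = 1)
    (hℓ : ∀ x ∈ S, 0 < ℓ x) (hu : HasContLineDerivOn u v S e) (hv : HasContLineDerivOn v d S e)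
    (hu0 : ∀ x ∈ S \ K, u x = 0) (hM : ∀ᵐ x ∂μ.restrict S, |ℓ x ^ σ * u x| ≤ M) :
    1 / 2 * ∫ x in S, ℓ x ^ (κ + 2 * σ) * v x ^ 4 ∂μ ≤
      M ^ 2 * ((|κ + 2 * σ| + |κ + σ|) ^ 2 * ∫ x in S, ℓ x ^ (κ - 2) * v x ^ 2 ∂μ +
        36 * ∫ x in S, ℓ x ^ κ * d x ^ 2 ∂μ) := by
  have hv0 := he.lineDeriv_eq_zero hK.isClosed hu hu0
  have hd0 := he.lineDeriv_eq_zero hK.isClosed hv hv0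
  have hpow (p : ℝ) : HasContLineDerivOn (fun x => ℓ x ^ p) (fun x => p * ℓ x ^ (p - 1)) S e := by
    simpa only [hℓe, mul_one] using
      (hasContLineDerivOn_continuousLinearMap (e := e) ℓ).rpow_const p hℓ
  have hF := ((hpow (κ + 2 * σ)).mul (hu.mul (hv.pow 3))).add
    (((hpow (κ + σ)).mul hv.abs_pow_three).const_mul M)
  have hvint : IntegrableOn (fun x => ℓ x ^ (κ - 2) * v x ^ 2) S μ :=
    integrableOn_rpow_const_mul_pow _ two_ne_zero hS hK hℓ hv.continuousOn hv0
  have hdint : IntegrableOn (fun x => ℓ x ^ κ * d x ^ 2) S μ :=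
    integrableOn_rpow_const_mul_pow _ two_ne_zero hS hK hℓ hv.continuousOn_deriv hd0
  have hmem := ae_restrict_mem (μ := μ) hS.measurableSet
  have hsum : (|κ + 2 * σ| + |κ + σ|) ^ 2 * ∫ x in S, ℓ x ^ (κ - 2) * v x ^ 2 ∂μ +
        36 * ∫ x in S, ℓ x ^ κ * d x ^ 2 ∂μ =
      ∫ x in S, ((|κ + 2 * σ| + |κ + σ|) ^ 2 * (ℓ x ^ (κ - 2) * v x ^ 2) +
        36 * (ℓ x ^ κ * d x ^ 2)) ∂μ := by
    rw [integral_add (hvint.const_mul _) (hdint.const_mul _), integral_const_mul,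
      integral_const_mul]
  rw [hsum]
  refine he.mul_setIntegral_le_mul_setIntegral hS hK hF
    (fun x hx => by simp [hu0 x hx, hv0 x hx]) ?_
    (integrableOn_rpow_const_mul_pow _ four_ne_zero hS hK hℓ hv.continuousOn hv0)
    ((hvint.const_mul _).add (hdint.const_mul _)) ?_
  · filter_upwards [hmem, hM] with x hx hxM
    exact rpow_mul_mul_cube_add_nonneg (hℓ x hx) hxM
  · filter_upwards [hmem, hM] with x hx hxM
    simpa only [Pi.add_apply, Nat.cast_ofNat, Nat.add_one_sub_one, add_assoc] using
      rpow_mul_half_pow_four_sub_le (κ := κ) (v := v x) (d := d x) (hℓ x hx) hxM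

/-- The constant of the interpolation inequality along a recession direction, for the weight
`ℓ ^ κ` on the second derivative and the weight `ℓ ^ σ` on the function. -/
noncomputable def interpolationConst (κ σ : ℝ) : ℝ :=
  2 * ((|κ + 2 * σ| + |κ + σ|) ^ 2 * (2 / (κ - 1)) ^ 2 + 36)

lemma interpolationConst_pos (κ σ : ℝ) : 0 < interpolationConst κ σ := by
  unfold interpolationConst; positivity

theorem IsRecessionDirection.setIntegral_rpow_mul_pow_four_le (he : IsRecessionDirection S e)
    (hS : IsClosed S) (hK : IsCompact K) (hℓe : ℓ e = 1) (hℓ : ∀ x ∈ S, 0 < ℓ x) (hκ : 1 < κ)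
    (hu : HasContLineDerivOn u v S e) (hv : HasContLineDerivOn v d S e)
    (hu0 : ∀ x ∈ S \ K, u x = 0) (hM : ∀ᵐ x ∂μ.restrict S, |ℓ x ^ σ * u x| ≤ M) :
    ∫ x in S, ℓ x ^ (κ + 2 * σ) * v x ^ 4 ∂μ ≤
      interpolationConst κ σ * M ^ 2 * ∫ x in S, ℓ x ^ κ * d x ^ 2 ∂μ := by
  have hv0 := he.lineDeriv_eq_zero hK.isClosed hu hu0
  have hhardy := he.setIntegral_hardy_le (μ := μ) hS hK hℓe hℓ hκ hv hv0
  calc ∫ x in S, ℓ x ^ (κ + 2 * σ) * v x ^ 4 ∂μ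
      = 2 * (1 / 2 * ∫ x in S, ℓ x ^ (κ + 2 * σ) * v x ^ 4 ∂μ) := by ring
    _ ≤ 2 * (M ^ 2 * ((|κ + 2 * σ| + |κ + σ|) ^ 2 * ∫ x in S, ℓ x ^ (κ - 2) * v x ^ 2 ∂μ +
          36 * ∫ x in S, ℓ x ^ κ * d x ^ 2 ∂μ)) := by
      gcongr 2 * ?_
      exact he.half_mul_setIntegral_rpow_mul_pow_four_le hS hK hℓe hℓ hu hv hu0 hM
    _ ≤ 2 * (M ^ 2 * ((|κ + 2 * σ| + |κ + σ|) ^ 2 *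
          ((2 / (κ - 1)) ^ 2 * ∫ x in S, ℓ x ^ κ * d x ^ 2 ∂μ) +
          36 * ∫ x in S, ℓ x ^ κ * d x ^ 2 ∂μ)) := by gcongr
    _ = _ := by unfold interpolationConst; ring

theorem IsRecessionDirection.eLpNorm_rpow_mul_le (he : IsRecessionDirection S e)
    (hS : IsClosed S) (hK : IsCompact K) (hℓe : ℓ e = 1) (hℓ : ∀ x ∈ S, 0 < ℓ x) (hκ : 1 < κ)
    (hu : HasContLineDerivOn u v S e) (hv : HasContLineDerivOn v d S e)
    (hu0 : ∀ x ∈ S \ K, u x = 0) :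
    eLpNorm (fun x => ℓ x ^ ((κ + 2 * σ) / 4) * v x) 4 (μ.restrict S) ≤
      ENNReal.ofReal (interpolationConst κ σ ^ (1 / 4 : ℝ)) *
        eLpNorm (fun x => ℓ x ^ (κ / 2) * d x) 2 (μ.restrict S) ^ (1 / 2 : ℝ) *
        eLpNorm (fun x => ℓ x ^ σ * u x) ⊤ (μ.restrict S) ^ (1 / 2 : ℝ) := by
  have hv0 := he.lineDeriv_eq_zero hK.isClosed hu hu0
  have hd0 := he.lineDeriv_eq_zero hK.isClosed hv hv0
  have hC := interpolationConst_pos κ σ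
  have htop : MemLp (fun x => ℓ x ^ σ * u x) ⊤ (μ.restrict S) :=
    memLp_top_of_continuousOn_of_eq_zero hS hK (continuousOn_rpow_const_mul σ hℓ hu.continuousOn)
      fun x hx => by simp [hu0 x hx]
  have hint := ENNReal.ofReal_le_ofReal
    (he.setIntegral_rpow_mul_pow_four_le hS hK hℓe hℓ hκ hu hv hu0
      (ae_norm_le_toReal_eLpNorm_top htop))
  rw [ENNReal.ofReal_mul (by positivity), ENNReal.ofReal_mul hC.le,
    ENNReal.ofReal_pow ENNReal.toReal_nonneg, ENNReal.ofReal_toReal htop.eLpNorm_ne_top] at hint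
  refine le_ofReal_rpow_mul_of_pow_four_le hC.le ?_
  have h4 := eLpNorm_rpow_div_mul_pow (μ := μ) (κ + 2 * σ) four_ne_zero (by decide) hS hK hℓ
    hv.continuousOn hv0
  have h2 := eLpNorm_rpow_div_mul_pow (μ := μ) κ two_ne_zero even_two hS hK hℓ
    hv.continuousOn_deriv hd0
  norm_num at h4 h2
  rw [h4, h2, mul_right_comm]
  exact hint

end AlongDirection

/-! ### The full gradient and equivalent weights -/

section Gradient

variable {E : Type*} [NormedAddCommGroup E] [NormedSpace ℝ E] {S : Set E} {e : E} {u : E → ℝ}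

lemma hasContLineDerivOn_of_contDiff (hu : ContDiff ℝ 1 u) :
    HasContLineDerivOn u (fun x => fderiv ℝ u x e) S e where
  continuousOn := hu.continuous.continuousOn
  continuousOn_deriv := ((hu.continuous_fderiv one_ne_zero).clm_apply
    continuous_const).continuousOn
  hasLineDerivAt x _ := (hu.differentiable one_ne_zero x).hasFDerivAt.hasLineDerivAt e

lemma hasContLineDerivOn_fderiv_apply (hu : ContDiff ℝ 2 u) :
    HasContLineDerivOn (fun x => fderiv ℝ u x e) (fun x => iteratedFDeriv ℝ 2 u x ![e, e]) S e := by
  have hu' : ContDiff ℝ 1 (fderiv ℝ u) := hu.fderiv_right le_rfl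
  have hsecond (x : E) :
      fderiv ℝ (fun y => fderiv ℝ u y e) x e = iteratedFDeriv ℝ 2 u x ![e, e] := by
    rw [iteratedFDeriv_two_apply,
      fderiv_clm_apply (hu'.differentiable one_ne_zero x) (differentiableAt_const e)]
    simp
  simpa only [hsecond] using
    hasContLineDerivOn_of_contDiff (u := fun y => fderiv ℝ u y e) (S := S) (e := e)
      (hu'.clm_apply contDiff_const)

lemma abs_iteratedFDeriv_two_apply_le (x e : E) :
    |iteratedFDeriv ℝ 2 u x ![e, e]| ≤ ‖e‖ ^ 2 * ‖iteratedFDeriv ℝ 2 u x‖ := by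
  simpa [sq, mul_comm] using (iteratedFDeriv ℝ 2 u x).le_opNorm ![e, e]

lemma exists_opNorm_le_mul_sum_norm_apply {ι F : Type*} [Fintype ι] [NormedAddCommGroup F]
    [NormedSpace ℝ F] (b : Module.Basis ι ℝ E) :
    ∃ K : ℝ, 0 < K ∧ ∀ L : E →L[ℝ] F, ‖L‖ ≤ K * ∑ i, ‖L (b i)‖ := by
  obtain ⟨K, hK, hL⟩ := b.exists_opNorm_le (F := F)
  exact ⟨K, hK, fun L => hL (by positivity) fun i =>
    Finset.single_le_sum (f := fun i => ‖L (b i)‖) (fun _ _ => norm_nonneg _) (Finset.mem_univ i)⟩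

variable [MeasurableSpace E] {μ : Measure E} {ℓ : E →L[ℝ] ℝ} {κ : ℝ}

lemma eLpNorm_rpow_mul_iteratedFDeriv_two_apply_le (p : ℝ) (q : ℝ≥0∞) (hS : MeasurableSet S)
    (hℓ : ∀ x ∈ S, 0 < ℓ x) :
    eLpNorm (fun x => ℓ x ^ p * iteratedFDeriv ℝ 2 u x ![e, e]) q (μ.restrict S) ≤
      ENNReal.ofReal (‖e‖ ^ 2) *
        eLpNorm (fun x => ℓ x ^ p * ‖iteratedFDeriv ℝ 2 u x‖) q (μ.restrict S) := by
  refine eLpNorm_le_mul_eLpNorm_of_ae_le_mul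
    (ae_restrict_of_forall_mem hS fun x hx => ?_) q
  have hpow := Real.rpow_nonneg (hℓ x hx).le p
  rw [norm_mul, norm_mul, norm_norm, Real.norm_of_nonneg hpow, mul_left_comm]
  exact mul_le_mul_of_nonneg_left (abs_iteratedFDeriv_two_apply_le x e) hpow

variable [BorelSpace E]

lemma eLpNorm_rpow_mul_fderiv_apply_le [IsFiniteMeasureOnCompacts μ] [μ.IsAddRightInvariant]
    (σ : ℝ) (hS : IsClosed S) (he : IsRecessionDirection S e) (hℓe : ℓ e = 1)
    (hℓ : ∀ x ∈ S, 0 < ℓ x) (hκ : 1 < κ) (hu : ContDiff ℝ 2 u) (huc : HasCompactSupport u) :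
    eLpNorm (fun x => ℓ x ^ ((κ + 2 * σ) / 4) * fderiv ℝ u x e) 4 (μ.restrict S) ≤
      ENNReal.ofReal (interpolationConst κ σ ^ (1 / 4 : ℝ) * ‖e‖) *
        eLpNorm (fun x => ℓ x ^ (κ / 2) * ‖iteratedFDeriv ℝ 2 u x‖) 2 (μ.restrict S) ^ (1 / 2 : ℝ) *
        eLpNorm (fun x => ℓ x ^ σ * u x) ⊤ (μ.restrict S) ^ (1 / 2 : ℝ) := by
  have hu1 : ContDiff ℝ 1 u := hu.of_le one_le_two
  have hsqrt : ENNReal.ofReal (‖e‖ ^ 2) ^ (1 / 2 : ℝ) = ENNReal.ofReal ‖e‖ := by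
    rw [ENNReal.ofReal_rpow_of_nonneg (by positivity) (by norm_num), ← Real.sqrt_eq_rpow,
      Real.sqrt_sq (norm_nonneg e)]
  refine (he.eLpNorm_rpow_mul_le hS huc.isCompact hℓe hℓ hκ (hasContLineDerivOn_of_contDiff hu1)
    (hasContLineDerivOn_fderiv_apply hu) fun x hx => image_eq_zero_of_notMem_tsupport hx.2).trans ?_
  rw [ENNReal.ofReal_mul (Real.rpow_nonneg (interpolationConst_pos κ σ).le _), ← hsqrt,
    mul_assoc (ENNReal.ofReal (interpolationConst κ σ ^ (1 / 4 : ℝ)))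
      (ENNReal.ofReal (‖e‖ ^ 2) ^ _),
    ← ENNReal.mul_rpow_of_nonneg _ _ (by norm_num : (0 : ℝ) ≤ 1 / 2)]
  gcongr
  exact eLpNorm_rpow_mul_iteratedFDeriv_two_apply_le _ _ hS.measurableSet hℓ

lemma eLpNorm_mul_fderiv_le_mul_sum {ι : Type*} [Fintype ι] {b : Module.Basis ι ℝ E} {K : ℝ}
    (hK : ∀ L : E →L[ℝ] ℝ, ‖L‖ ≤ K * ∑ i, ‖L (b i)‖) (p : ℝ) {q : ℝ≥0∞} (hq : 1 ≤ q)
    (hS : MeasurableSet S) (hℓ : ∀ x ∈ S, 0 < ℓ x) (hu : ContDiff ℝ 1 u) :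
    eLpNorm (fun x => ℓ x ^ p * ‖fderiv ℝ u x‖) q (μ.restrict S) ≤
      ENNReal.ofReal K *
        ∑ i, eLpNorm (fun x => ℓ x ^ p * fderiv ℝ u x (b i)) q (μ.restrict S) := by
  have hsum := eLpNorm_sum_le (μ := μ.restrict S) (p := q) (s := Finset.univ)
    (f := fun i x => |ℓ x ^ p * fderiv ℝ u x (b i)|)
    (fun i _ => ((continuousOn_rpow_const_mul p hℓ
      (hasContLineDerivOn_of_contDiff hu).continuousOn_deriv).abs).aestronglyMeasurable hS) hq
  simp only [← Real.norm_eq_abs, eLpNorm_norm] at hsum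
  refine le_trans ?_ (mul_le_mul_right hsum _)
  refine eLpNorm_le_mul_eLpNorm_of_ae_le_mul
    (ae_restrict_of_forall_mem hS fun x _ => ?_) q
  have hnonneg := Finset.sum_nonneg fun i (_ : i ∈ Finset.univ) => norm_nonneg (fderiv ℝ u x (b i))
  simp only [norm_mul, norm_norm, Finset.sum_apply]
  rw [← Finset.mul_sum, norm_mul, norm_norm, Real.norm_of_nonneg hnonneg, mul_left_comm]
  exact mul_le_mul_of_nonneg_left (hK _) (norm_nonneg _)

theorem exists_eLpNorm_rpow_mul_fderiv_le [IsFiniteMeasureOnCompacts μ] [μ.IsAddRightInvariant]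
    {ι : Type*} [Finite ι] (b : Module.Basis ι ℝ E) (σ : ℝ) (hS : IsClosed S)
    (hb : ∀ i, IsRecessionDirection S (b i)) (hℓb : ∀ i, ℓ (b i) = 1) (hℓ : ∀ x ∈ S, 0 < ℓ x)
    (hκ : 1 < κ) :
    ∃ C : ℝ, 0 < C ∧ ∀ u : E → ℝ, ContDiff ℝ 2 u → HasCompactSupport u →
      eLpNorm (fun x => ℓ x ^ ((κ + 2 * σ) / 4) * ‖fderiv ℝ u x‖) 4 (μ.restrict S) ≤
        ENNReal.ofReal C *
          eLpNorm (fun x => ℓ x ^ (κ / 2) * ‖iteratedFDeriv ℝ 2 u x‖) 2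
            (μ.restrict S) ^ (1 / 2 : ℝ) *
          eLpNorm (fun x => ℓ x ^ σ * u x) ⊤ (μ.restrict S) ^ (1 / 2 : ℝ) := by
  cases nonempty_fintype ι
  obtain ⟨K, hK, hL⟩ := exists_opNorm_le_mul_sum_norm_apply (F := ℝ) b
  have hc (i : ι) : 0 ≤ interpolationConst κ σ ^ (1 / 4 : ℝ) * ‖b i‖ :=
    mul_nonneg (Real.rpow_nonneg (interpolationConst_pos κ σ).le _) (norm_nonneg _)
  refine ⟨K * (1 + ∑ i, interpolationConst κ σ ^ (1 / 4 : ℝ) * ‖b i‖),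
    mul_pos hK (by linarith [Finset.sum_nonneg fun i (_ : i ∈ Finset.univ) => hc i]), ?_⟩
  intro u hu huc
  refine (eLpNorm_mul_fderiv_le_mul_sum hL _ (by norm_num) hS.measurableSet hℓ
    (hu.of_le one_le_two)).trans ?_
  refine (mul_le_mul_right (Finset.sum_le_sum fun i _ =>
    eLpNorm_rpow_mul_fderiv_apply_le σ hS (hb i) (hℓb i) hℓ hκ hu huc) _).trans ?_
  rw [← Finset.sum_mul, ← Finset.sum_mul, ← ENNReal.ofReal_sum_of_nonneg fun i _ => hc i,
    ← mul_assoc, ← mul_assoc, ← ENNReal.ofReal_mul hK.le]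
  gcongr
  linarith

end Gradient

section EquivalentWeights

lemma rpow_le_rpow_abs_mul_rpow {a b c : ℝ} (p : ℝ) (ha : 0 < a) (hb : 0 < b) (hab : a ≤ c * b)
    (hba : b ≤ c * a) : a ^ p ≤ c ^ |p| * b ^ p := by
  have hc : 0 < c := pos_of_mul_pos_left (ha.trans_le hab) hb.le
  rcases le_total 0 p with hp | hp
  · rw [abs_of_nonneg hp, ← Real.mul_rpow hc.le hb.le]
    gcongr
  · calc a ^ p = c ^ |p| * (c * a) ^ p := by
          rw [abs_of_nonpos hp, Real.mul_rpow hc.le ha.le, ← mul_assoc, ← Real.rpow_add hc,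
            neg_add_cancel, Real.rpow_zero, one_mul]
      _ ≤ c ^ |p| * b ^ p := by
          gcongr ?_ * ?_
          exact Real.rpow_le_rpow_of_nonpos hb hba hp

lemma eLpNorm_rpow_mul_le_of_le_mul {α : Type*} [MeasurableSpace α] {μ : Measure α} {S : Set α}
    {a b f : α → ℝ} {c : ℝ} (p : ℝ) (q : ℝ≥0∞) (hS : MeasurableSet S) (ha : ∀ x ∈ S, 0 < a x)
    (hb : ∀ x ∈ S, 0 < b x) (hab : ∀ x ∈ S, a x ≤ c * b x) (hba : ∀ x ∈ S, b x ≤ c * a x) :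
    eLpNorm (fun x => a x ^ p * f x) q (μ.restrict S) ≤
      ENNReal.ofReal (c ^ |p|) * eLpNorm (fun x => b x ^ p * f x) q (μ.restrict S) := by
  refine eLpNorm_le_mul_eLpNorm_of_ae_le_mul (ae_restrict_of_forall_mem hS fun x hx => ?_) q
  rw [norm_mul, norm_mul, Real.norm_of_nonneg (Real.rpow_nonneg (ha x hx).le _),
    Real.norm_of_nonneg (Real.rpow_nonneg (hb x hx).le _), ← mul_assoc]
  gcongr
  exact rpow_le_rpow_abs_mul_rpow p (ha x hx) (hb x hx) (hab x hx) (hba x hx)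

end EquivalentWeights

theorem exists_eLpNorm_rpow_mul_fderiv_le_of_le_mul {E ι : Type*} [NormedAddCommGroup E]
    [NormedSpace ℝ E] [MeasurableSpace E] [BorelSpace E] [Finite ι] {μ : Measure E}
    [IsFiniteMeasureOnCompacts μ] [μ.IsAddRightInvariant] {S : Set E} {ℓ : E →L[ℝ] ℝ}
    {ρ : E → ℝ} {κ c : ℝ} (b : Module.Basis ι ℝ E) (σ : ℝ) (hS : IsClosed S)
    (hb : ∀ i, IsRecessionDirection S (b i)) (hℓb : ∀ i, ℓ (b i) = 1) (hℓ : ∀ x ∈ S, 0 < ℓ x)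
    (hℓρ : ∀ x ∈ S, ℓ x ≤ c * ρ x) (hρℓ : ∀ x ∈ S, ρ x ≤ c * ℓ x) (hc : 0 < c) (hκ : 1 < κ) :
    ∃ C : ℝ, 0 < C ∧ ∀ u : E → ℝ, ContDiff ℝ 2 u → HasCompactSupport u →
      eLpNorm (fun x => ρ x ^ ((κ + 2 * σ) / 4) * ‖fderiv ℝ u x‖) 4 (μ.restrict S) ≤
        ENNReal.ofReal C *
          eLpNorm (fun x => ρ x ^ (κ / 2) * ‖iteratedFDeriv ℝ 2 u x‖) 2
            (μ.restrict S) ^ (1 / 2 : ℝ) *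
          eLpNorm (fun x => ρ x ^ σ * u x) ⊤ (μ.restrict S) ^ (1 / 2 : ℝ) := by
  obtain ⟨C, hC, hmain⟩ := exists_eLpNorm_rpow_mul_fderiv_le (μ := μ) b σ hS hb hℓb hℓ hκ
  have hm := hS.measurableSet
  have hρ : ∀ x ∈ S, 0 < ρ x := fun x hx =>
    pos_of_mul_pos_right ((hℓ x hx).trans_le (hℓρ x hx)) hc.le
  have hfactor (p : ℝ) (t : ℝ≥0∞) : (ENNReal.ofReal (c ^ |p|) * t) ^ (1 / 2 : ℝ) =
      ENNReal.ofReal ((c ^ |p|) ^ (1 / 2 : ℝ)) * t ^ (1 / 2 : ℝ) := by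
    rw [ENNReal.mul_rpow_of_nonneg _ _ (by norm_num),
      ENNReal.ofReal_rpow_of_nonneg (by positivity) (by norm_num)]
  refine ⟨c ^ |(κ + 2 * σ) / 4| * C * (c ^ |κ / 2|) ^ (1 / 2 : ℝ) * (c ^ |σ|) ^ (1 / 2 : ℝ),
    by positivity, fun u hu huc => ?_⟩
  have hHess := eLpNorm_rpow_mul_le_of_le_mul (μ := μ) (f := fun x => ‖iteratedFDeriv ℝ 2 u x‖)
    (κ / 2) 2 hm hℓ hρ hℓρ hρℓ
  have hTop := eLpNorm_rpow_mul_le_of_le_mul (μ := μ) (f := u) σ ⊤ hm hℓ hρ hℓρ hρℓ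
  refine (eLpNorm_rpow_mul_le_of_le_mul _ 4 hm hρ hℓ hρℓ hℓρ).trans
    ((mul_le_mul_right (hmain u hu huc) _).trans ?_)
  grw [hHess, hTop]
  rw [hfactor, hfactor, ENNReal.ofReal_mul (by positivity), ENNReal.ofReal_mul (by positivity),
    ENNReal.ofReal_mul (by positivity)]
  exact le_of_eq (by ring)

/-! ### The cone -/

section Cone

variable {φ0 : ℝ} {x : Fin 3 → ℝ}

lemma le_rr (x : Fin 3 → ℝ) : x 2 ≤ rr x :=
  Real.le_sqrt_of_sq_le (by nlinarith [sq_nonneg (x 0), sq_nonneg (x 1)])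

lemma rr_le_inv_cos_mul (hφ0 : 0 < Real.cos φ0) (hx : x ∈ cone φ0) :
    rr x ≤ (Real.cos φ0)⁻¹ * x 2 := by
  obtain ⟨hT, -, hx2⟩ := hx
  refine Real.sqrt_le_iff.2 ⟨by positivity, ?_⟩
  rw [mul_pow, inv_pow, ← Real.inv_one_add_tan_sq hφ0.ne', inv_inv]
  linarith

lemma continuous_rr : Continuous rr := by
  unfold rr; fun_prop

/-- The strict inequality `0 < x 2` is a closed condition here because `1 ≤ rr x` keeps the cone
away from its apex. -/
lemma isClosed_cone (hφ0 : 0 < Real.cos φ0) : IsClosed (cone φ0) := by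
  have hcone : cone φ0 = {x | x 0 ^ 2 + x 1 ^ 2 ≤ Real.tan φ0 ^ 2 * x 2 ^ 2} ∩
      {x | 1 ≤ rr x} ∩ {x | Real.cos φ0 ≤ x 2} := by
    ext x
    refine ⟨fun hx => ⟨⟨hx.1, hx.2.1⟩, ?_⟩, fun hx => ⟨hx.1.1, hx.1.2, hφ0.trans_le hx.2⟩⟩
    simpa [le_inv_mul_iff₀ hφ0] using hx.2.1.trans (rr_le_inv_cos_mul hφ0 hx)
  rw [hcone]
  exact ((isClosed_le (by fun_prop) (by fun_prop)).inter
    (isClosed_le continuous_const continuous_rr)).inter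
      (isClosed_le continuous_const (continuous_apply 2))

lemma sq_add_mul_le_of_mem_cone {a b : ℝ} (hx : x ∈ cone φ0) :
    (a * x 0 + b * x 1) ^ 2 ≤ (a ^ 2 + b ^ 2) * (Real.tan φ0 ^ 2 * x 2 ^ 2) := calc
  (a * x 0 + b * x 1) ^ 2 ≤ (a ^ 2 + b ^ 2) * (x 0 ^ 2 + x 1 ^ 2) := by
    linarith [sq_nonneg (a * x 1 - b * x 0)]
  _ ≤ _ := by gcongr; exact hx.1

/-- The first condition puts `![a, b, 1]` in the solid cone, the second one in its dual cone, so
that `rr` increases along it. -/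
lemma isRecessionDirection_cone {a b : ℝ} (hab : a ^ 2 + b ^ 2 ≤ Real.tan φ0 ^ 2)
    (hab' : (a ^ 2 + b ^ 2) * Real.tan φ0 ^ 2 ≤ 1) :
    IsRecessionDirection (cone φ0) ![a, b, 1] := by
  intro x hx t ht
  have hCS := sq_add_mul_le_of_mem_cone (a := a) (b := b) hx
  obtain ⟨hT, hr, hx2⟩ := hx
  have hcross : a * x 0 + b * x 1 ≤ Real.tan φ0 ^ 2 * x 2 := by
    refine (abs_le_of_sq_le_sq' (hCS.trans ?_) (by positivity)).2
    rw [mul_pow, sq (Real.tan φ0 ^ 2), mul_assoc]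
    gcongr
  have hdual : 0 ≤ a * x 0 + b * x 1 + x 2 := by
    refine neg_le_iff_add_nonneg.1 (abs_le_of_sq_le_sq' (hCS.trans ?_) hx2.le).1
    rw [← mul_assoc]
    exact mul_le_of_le_one_left (sq_nonneg _) hab'
  have h0 : (x + t • ![a, b, 1]) 0 = x 0 + t * a := by simp
  have h1 : (x + t • ![a, b, 1]) 1 = x 1 + t * b := by simp
  have h2 : (x + t • ![a, b, 1]) 2 = x 2 + t := by simp
  refine ⟨?_, hr.trans (Real.sqrt_le_sqrt ?_), ?_⟩ <;> simp only [h0, h1, h2]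
  · linarith [mul_le_mul_of_nonneg_left hcross ht, mul_le_mul_of_nonneg_left hab (sq_nonneg t)]
  · linarith [mul_nonneg ht hdual, sq_nonneg (t * a), sq_nonneg (t * b), sq_nonneg t]
  · linarith

lemma exists_basis_isRecessionDirection_cone (hφ0 : 0 < Real.tan φ0) :
    ∃ b : Module.Basis (Fin 3) ℝ (Fin 3 → ℝ),
      ∀ i, IsRecessionDirection (cone φ0) (b i) ∧ b i 2 = 1 := by
  let δ := min (Real.tan φ0) (Real.tan φ0)⁻¹
  have hδ : 0 < δ := lt_min hφ0 (inv_pos.2 hφ0)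
  let A : Matrix (Fin 3) (Fin 3) ℝ := !![δ, 0, 1; 0, δ, 1; 0, 0, 1]
  have hA : A.det ≠ 0 := by simp [A, Matrix.det_fin_three, hδ.ne']
  have hδT : δ ^ 2 ≤ Real.tan φ0 ^ 2 := by gcongr; exact min_le_left _ _
  have hδT' : δ ^ 2 * Real.tan φ0 ^ 2 ≤ 1 := by
    rw [← mul_pow]
    refine pow_le_one₀ (by positivity) ?_
    calc δ * Real.tan φ0 ≤ (Real.tan φ0)⁻¹ * Real.tan φ0 := by gcongr; exact min_le_right _ _
      _ = 1 := inv_mul_cancel₀ hφ0.ne'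
  refine ⟨basisOfLinearIndependentOfCardEqFinrank
    (Matrix.linearIndependent_rows_of_det_ne_zero hA) (by simp), fun i => ?_⟩
  rw [coe_basisOfLinearIndependentOfCardEqFinrank]
  fin_cases i
  · exact ⟨isRecessionDirection_cone (a := δ) (b := 0) (by simpa) (by simpa), rfl⟩
  · exact ⟨isRecessionDirection_cone (a := 0) (b := δ) (by simpa) (by simpa), rfl⟩
  · exact ⟨isRecessionDirection_cone (a := 0) (b := 0) (by simpa using sq_nonneg _) (by simp), rfl⟩

end Cone

theorem weighted_interpolation_on_cone_general {γ φ0 : ℝ} (σ : ℝ) (hγ : 1 < γ) (hφ0 : 0 < φ0)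
    (hφ0' : φ0 < Real.pi / 2) :
    ∃ C : ℝ, 0 < C ∧
      ∀ u : (Fin 3 → ℝ) → ℝ, ContDiff ℝ 2 u → HasCompactSupport u →
        eLpNorm (fun x => rr x ^ ((2 * γ + 2 * σ - 1) / 4) * ‖fderiv ℝ u x‖) 4
            (volume.restrict (cone φ0)) ≤
          ENNReal.ofReal C *
            (eLpNorm (fun x => rr x ^ ((2 * γ - 1) / 2) * ‖iteratedFDeriv ℝ 2 u x‖) 2
                (volume.restrict (cone φ0))) ^ (1 / 2 : ℝ) *
            (eLpNorm (fun x => rr x ^ σ * u x) ⊤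
                (volume.restrict (cone φ0))) ^ (1 / 2 : ℝ) := by
  have hcos : 0 < Real.cos φ0 := Real.cos_pos_of_mem_Ioo ⟨by linarith, hφ0'⟩
  obtain ⟨b, hb⟩ := exists_basis_isRecessionDirection_cone
    (Real.tan_pos_of_pos_of_lt_pi_div_two hφ0 hφ0')
  rw [show (2 * γ + 2 * σ - 1) / 4 = (2 * γ - 1 + 2 * σ) / 4 by ring]
  exact exists_eLpNorm_rpow_mul_fderiv_le_of_le_mul (ℓ := ContinuousLinearMap.proj 2)
    (c := (Real.cos φ0)⁻¹) b σ (isClosed_cone hcos) (fun i => (hb i).1) (fun i => (hb i).2)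
    (fun x hx => hx.2.2) (fun x _ => (le_rr x).trans
      (le_mul_of_one_le_left (Real.sqrt_nonneg _) ((one_le_inv₀ hcos).2 (Real.cos_le_one φ0))))
    (fun x hx => rr_le_inv_cos_mul hcos hx) (inv_pos.2 hcos) (by linarith)

/-- weighted Caffarelli–Kohn–Nirenberg-type interpolation inequality on
the cone: ‖r^((2γ+2σ−1)/4) ∇u‖_{L⁴} ≤ C ‖r^((2γ−1)/2) ∇²u‖_{L²}^{1/2} ‖r^σ u‖_{L^∞}^{1/2}. -/
theorem weighted_interpolation_on_cone (γ σ φ0 : ℝ)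
    (hγ1 : 1 < γ) (hγ2 : γ < 2) (hσ : 0 < σ)
    (hφ0 : 0 < φ0) (hφ0' : φ0 < Real.pi / 2) :
    ∃ C : ℝ, 0 < C ∧
      ∀ u : (Fin 3 → ℝ) → ℝ, ContDiff ℝ (⊤ : ℕ∞) u → HasCompactSupport u →
        eLpNorm (fun x => rr x ^ ((2 * γ + 2 * σ - 1) / 4) * ‖fderiv ℝ u x‖) 4
            (volume.restrict (cone φ0)) ≤
          ENNReal.ofReal C *
            (eLpNorm (fun x => rr x ^ ((2 * γ - 1) / 2) * ‖iteratedFDeriv ℝ 2 u x‖) 2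
                (volume.restrict (cone φ0))) ^ (1 / 2 : ℝ) *
            (eLpNorm (fun x => rr x ^ σ * u x) ⊤
                (volume.restrict (cone φ0))) ^ (1 / 2 : ℝ) := by
  obtain ⟨C, hC, h⟩ := weighted_interpolation_on_cone_general σ hγ1 hφ0 hφ0'
  exact ⟨C, hC, fun u hu => h u (contDiff_infty.1 hu 2)⟩
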